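/- Let A = (a_ij) be an n×n dual quaternion Hermitian matrix, α a dual quaternion, and P_{ij;α} an addition matrix. Then Cdet(P_{ij;α}* A P_{ij;α}) = Cdet(A). -/

import Mathlib

/-!
Why the theorem holds. For a Hermitian matrix, reversing a cycle of a permutation conjugates the
corresponding cycle product and changes neither the leaders nor the other cycles. Averaging over
such reversals, one leader at a time, replaces every cycle product in `Cdet A` by its real part
(`mixed_add_rev`, `sum_mixed`). Since `Re (a b) = Re (b a)`, real parts of cycle products do not
depend on the starting points, so `Cdet A` equals the commutative expression
`redDet A = Σ_σ (-1)^(n-r) ∏_{cycles} Re (cycle product)`, which takes values in the dual numbers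
(`Cdet_eq_redDet`).

The expression `redDet` makes sense for every matrix. It is additive in each column
(`redDet_add_column`) and invariant under conjugate transposition (`redDet_conjTranspose`). The
main point is that it vanishes if column `i` is column `j` times `α` and the matrix is Hermitian
away from the index `i` (`redDet_dependent`). Indeed, pair a permutation `σ` having `i` and `j` in
different cycles with `swap i j * σ`, in which the two cycles are merged. If the cycle products
of `σ` are `X α` at `i` and `Y` at `j`, then the merged cycle has product `X Y α`, so the pair
contributes a common factor times `Re (X α) Re Y - Re (X Y α)`; this cancels after averaging over
the reversal of the cycle of `j`, because `Y + Y* = 2 Re Y` is central.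

Hence right multiplication by `P = P_{ij;α}` preserves `redDet` for matrices that are Hermitian
away from `i` (`redDet_mul_addMatrix`). This applies to `A`, and to `(A P)ᴴ`, which agrees with
`A` away from `i`; and `Pᴴ A P = (A P)ᴴ P`.
-/

/-!
Formalization background for "Moore Determinant of Dual Quaternion Hermitian Matrices"
(Cui, Qi, Song, Wang).

A dual quaternion is `q = q_s + q_d ε` with `q_s, q_d` quaternions, `ε² = 0`; it is modeled
by `DualNumber (Quaternion ℝ)`.
-/

open Quaternion Matrix

noncomputable section

/-- Dual quaternions: dual numbers over the quaternions. -/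
abbrev DualQuaternion : Type := DualNumber (Quaternion ℝ)

namespace DQPaper

/-- Conjugation of dual quaternions: `(q_s + q_d ε)* = q_s* + q_d* ε`. -/
instance : Star DualQuaternion := ⟨fun q => (star q.fst, star q.snd)⟩

/-- The real part of a dual quaternion `q = q_s + q_d ε`, as the dual number
`Re(q_s) + Re(q_d) ε`. -/
def dqRe (q : DualQuaternion) : DualNumber ℝ := (q.fst.re, q.snd.re)

/-- The embedding of the dual numbers into the dual quaternions. -/
def toDQ (d : DualNumber ℝ) : DualQuaternion := ((d.fst : ℍ[ℝ]), (d.snd : ℍ[ℝ]))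

/-- A dual quaternion is a dual number if its standard and dual parts are both real. -/
def IsDualNum (q : DualQuaternion) : Prop := ∃ d : DualNumber ℝ, q = toDQ d

/-- A dual number `a + b ε` is nonnegative if `a > 0`, or `a = 0` and `b ≥ 0`. -/
def DNNonneg (u : DualNumber ℝ) : Prop := 0 < u.fst ∨ (u.fst = 0 ∧ 0 ≤ u.snd)

/-- The order on dual numbers: `u ≤ v` iff `v - u` is nonnegative. -/
def dnLe (u v : DualNumber ℝ) : Prop := DNNonneg (v - u)

open Classical in
/-- The magnitude of a dual quaternion `p = p_s + p_d ε`, as a dual number: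
`|p| = |p_s| + ((p_s* p_d + p_d* p_s)/(2|p_s|)) ε` if `p_s ≠ 0`, and `|p| = |p_d| ε`
otherwise. -/
def dqMag (p : DualQuaternion) : DualNumber ℝ :=
  if p.fst = 0 then (0, ‖p.snd‖)
  else (‖p.fst‖, ((star p.fst * p.snd + star p.snd * p.fst).re) / (2 * ‖p.fst‖))

/-- The cycle of the permutation `σ` containing `i`, listed as `[i, σ i, σ² i, …]`. -/
def cycleList {n : ℕ} (σ : Equiv.Perm (Fin n)) (i : Fin n) : List (Fin n) :=
  i :: (((List.range n).map (fun k => (σ ^ (k + 1)) i)).takeWhile (fun j => decide (j ≠ i)))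

/-- The leaders (largest element of each cycle) of `σ`, listed in decreasing order;
this is the normalization used in the Chen determinant. -/
def chenLeaders {n : ℕ} (σ : Equiv.Perm (Fin n)) : List (Fin n) :=
  ((List.finRange n).filter (fun i => (cycleList σ i).all (fun j => decide (j ≤ i)))).reverse

/-- All of `Fin n` listed in the normalized cycle order of the Chen determinant:
each cycle is led by its largest element, and cycles are ordered by decreasing leaders
(so the first cycle contains the last index). -/
def chenOrder {n : ℕ} (σ : Equiv.Perm (Fin n)) : List (Fin n) :=
  ((chenLeaders σ).map (cycleList σ)).flatten

/-- The Chen determinant of a square matrix over a (possibly noncommutative) ring: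
`Cdet A = Σ_σ (−1)^{n−r} a_σ`, where `σ` runs over all permutations written in the
normalized cycle form with `r` disjoint cycles, and `a_σ` is the ordered product of the
entries `A i (σ i)` along the normalized cycle order. -/
def Cdet {n : ℕ} {R : Type*} [Ring R] (A : Matrix (Fin n) (Fin n) R) : R :=
  ∑ σ : Equiv.Perm (Fin n),
    (-1 : R) ^ (n - (chenLeaders σ).length) * ((chenOrder σ).map (fun i => A i (σ i))).prod

/-- The leaders (smallest element of each cycle) of `σ`, listed in decreasing order;
this is the normalization used in the Moore determinant. -/
def mooreLeaders {n : ℕ} (σ : Equiv.Perm (Fin n)) : List (Fin n) :=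
  ((List.finRange n).filter (fun i => (cycleList σ i).all (fun j => decide (i ≤ j)))).reverse

/-- All of `Fin n` listed in the normalized cycle order of the Moore determinant:
each cycle is led by its smallest element, and cycles are ordered by decreasing leaders. -/
def mooreOrder {n : ℕ} (σ : Equiv.Perm (Fin n)) : List (Fin n) :=
  ((mooreLeaders σ).map (cycleList σ)).flatten

/-- The Moore determinant of a square matrix over a (possibly noncommutative) ring:
`Mdet A = Σ_σ s(σ) a_σ`, where `s(σ)` is the sign of `σ` and `a_σ` is the ordered product
of the entries `A i (σ i)` along the normalized (Moore) cycle order. -/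
def Mdet {n : ℕ} {R : Type*} [Ring R] (A : Matrix (Fin n) (Fin n) R) : R :=
  ∑ σ : Equiv.Perm (Fin n),
    ((Equiv.Perm.sign σ : ℤ) : R) * ((mooreOrder σ).map (fun i => A i (σ i))).prod

/-- The switching matrix `P_{ij}`: the identity matrix with rows `i` and `j` interchanged. -/
def switchMatrix {R : Type*} [Ring R] {n : ℕ} (i j : Fin n) : Matrix (Fin n) (Fin n) R :=
  Matrix.of fun k l =>
    if (k = i ∧ l = j) ∨ (k = j ∧ l = i) ∨ (k = l ∧ k ≠ i ∧ k ≠ j) then 1 else 0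

/-- The multiplication matrix `P_{i;c}`: the identity matrix with the `(i,i)` entry
replaced by `c`. -/
def mulMatrix {R : Type*} [Ring R] {n : ℕ} (i : Fin n) (c : R) : Matrix (Fin n) (Fin n) R :=
  Matrix.of fun k l => if k = l then (if k = i then c else 1) else 0

/-- The addition matrix `P_{ij;c}`: the identity matrix with an extra entry `c` in
position `(j,i)`, so that `P_{ij;c} * A` adds `c` times row `i` of `A` to row `j`. -/
def addMatrix {R : Type*} [Ring R] {n : ℕ} (i j : Fin n) (c : R) : Matrix (Fin n) (Fin n) R :=
  Matrix.of fun k l => (if k = l then 1 else 0) + (if k = j ∧ l = i then c else 0)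

/-- The product `A i₁ i₂ * A i₂ i₃ * ⋯ * A i_{m-1} i_m` of matrix entries along a chain of
indices `[i₁, …, i_m]`; applied to a closed chain `[i₁, …, i_m, i₁]` it gives the cycle
product `⟨i₁ … i_m i₁⟩ = a_{i₁ i₂} ⋯ a_{i_m i₁}`. -/
def chainProd {n : ℕ} (A : Matrix (Fin n) (Fin n) DualQuaternion) :
    List (Fin n) → DualQuaternion
  | [] => 1
  | [_] => 1
  | i :: j :: rest => A i j * chainProd A (j :: rest)

/-- A dual number `lam` is a (right) eigenvalue of the dual quaternion matrix `A` if
`A x = x lam` for some appreciable dual quaternion vector `x` (i.e. one whose standard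
part is nonzero). -/
def IsEigenvalue {n : ℕ} (A : Matrix (Fin n) (Fin n) DualQuaternion)
    (lam : DualNumber ℝ) : Prop :=
  ∃ x : Fin n → DualQuaternion,
    (fun i => (x i).fst) ≠ 0 ∧ A.mulVec x = fun i => x i * toDQ lam

/-- The dual quaternion Hermitian matrix `A` has the dual numbers `lam 1, …, lam n` as its
eigenvalues (counted with multiplicity), via the unitary diagonalization `U A U* = diag(lam)`
of Qi and Luo (2023). -/
def HasEigenvalues {n : ℕ} (A : Matrix (Fin n) (Fin n) DualQuaternion)
    (lam : Fin n → DualNumber ℝ) : Prop :=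
  ∃ U : Matrix (Fin n) (Fin n) DualQuaternion,
    Uᴴ * U = 1 ∧ U * A * Uᴴ = Matrix.diagonal fun i => toDQ (lam i)

/-! ### Conjugation and real part of dual quaternions -/

lemma star_fst' (q : DualQuaternion) : (star q).fst = star q.fst := rfl

lemma star_snd' (q : DualQuaternion) : (star q).snd = star q.snd := rfl

lemma dq_star_mul (a b : DualQuaternion) : star (a * b) = star b * star a := by
  refine TrivSqZeroExt.ext ?_ ?_
  · simp [star_fst']
  · simp [star_fst', star_snd', add_comm]

lemma dq_star_add (a b : DualQuaternion) : star (a + b) = star a + star b := by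
  refine TrivSqZeroExt.ext ?_ ?_ <;> simp [star_fst', star_snd']

lemma dq_star_star (a : DualQuaternion) : star (star a) = a := by
  refine TrivSqZeroExt.ext ?_ ?_ <;> simp [star_fst', star_snd']

lemma dq_star_one : star (1 : DualQuaternion) = 1 := by
  refine TrivSqZeroExt.ext ?_ ?_ <;> simp [star_fst', star_snd']

/-- The conjugation of dual quaternions makes them a star ring. It is not declared as an instance,
so that `star` keeps a single meaning. -/
@[reducible] def dqStarRing : StarRing DualQuaternion where
  star_involutive := dq_star_star
  star_mul := dq_star_mul
  star_add := dq_star_add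

lemma dq_conjTranspose_mul {n : ℕ} (M N : Matrix (Fin n) (Fin n) DualQuaternion) :
    (M * N)ᴴ = Nᴴ * Mᴴ := by
  let := dqStarRing
  exact Matrix.conjTranspose_mul M N

lemma dq_conjTranspose_conjTranspose {n : ℕ} (M : Matrix (Fin n) (Fin n) DualQuaternion) :
    Mᴴᴴ = M := by
  let := dqStarRing
  exact Matrix.conjTranspose_conjTranspose M

lemma dqRe_fst (q : DualQuaternion) : (dqRe q).fst = q.fst.re := rfl

lemma dqRe_snd (q : DualQuaternion) : (dqRe q).snd = q.snd.re := rfl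

lemma toDQ_fst (d : DualNumber ℝ) : (toDQ d).fst = (d.fst : ℍ[ℝ]) := rfl

lemma toDQ_snd (d : DualNumber ℝ) : (toDQ d).snd = (d.snd : ℍ[ℝ]) := rfl

lemma dqRe_add (a b : DualQuaternion) : dqRe (a + b) = dqRe a + dqRe b := by
  refine TrivSqZeroExt.ext ?_ ?_ <;> simp [dqRe_fst, dqRe_snd]

lemma dqRe_star (a : DualQuaternion) : dqRe (star a) = dqRe a := by
  refine TrivSqZeroExt.ext ?_ ?_ <;> simp [dqRe_fst, dqRe_snd, star_fst', star_snd']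

lemma dqRe_mul_comm (a b : DualQuaternion) : dqRe (a * b) = dqRe (b * a) := by
  refine TrivSqZeroExt.ext ?_ ?_
  · simp [dqRe_fst]; ring
  · simp [dqRe_snd]; ring

/-- The embedding of dual numbers as a ring homomorphism. -/
def toDQHom : DualNumber ℝ →+* DualQuaternion where
  toFun := toDQ
  map_one' := by refine TrivSqZeroExt.ext ?_ ?_ <;> simp [toDQ_fst, toDQ_snd]
  map_zero' := by refine TrivSqZeroExt.ext ?_ ?_ <;> simp [toDQ_fst, toDQ_snd]
  map_add' a b := by refine TrivSqZeroExt.ext ?_ ?_ <;> simp [toDQ_fst, toDQ_snd]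
  map_mul' a b := by
    refine TrivSqZeroExt.ext ?_ ?_
    · simp [toDQ_fst]
    · simp [toDQ_fst, toDQ_snd]

lemma toDQHom_fst (d : DualNumber ℝ) : (toDQHom d).fst = (d.fst : ℍ[ℝ]) := rfl

lemma toDQHom_snd (d : DualNumber ℝ) : (toDQHom d).snd = (d.snd : ℍ[ℝ]) := rfl

lemma toDQHom_comm (d : DualNumber ℝ) (q : DualQuaternion) :
    toDQHom d * q = q * toDQHom d := by
  refine TrivSqZeroExt.ext ?_ ?_
  · simp [toDQHom_fst, Quaternion.coe_commutes]
  · simp [toDQHom_fst, toDQHom_snd, Quaternion.coe_commutes, add_comm]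

lemma dqRe_toDQHom_mul (d : DualNumber ℝ) (q : DualQuaternion) :
    dqRe (toDQHom d * q) = d * dqRe q := by
  refine TrivSqZeroExt.ext ?_ ?_
  · simp [dqRe_fst, toDQHom_fst]
  · simp [dqRe_snd, dqRe_fst, toDQHom_fst, toDQHom_snd, mul_comm]

lemma add_star_eq (q : DualQuaternion) : q + star q = toDQHom (2 * dqRe q) := by
  rw [two_mul]
  refine TrivSqZeroExt.ext ?_ ?_
  · ext <;> simp [star_fst', toDQHom_fst, dqRe_fst]
  · ext <;> simp [star_snd', toDQHom_snd, dqRe_snd]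

lemma two_mul_cancel_dn {a b : DualNumber ℝ} (h : a + a = b + b) : a = b := by
  have h1 := congrArg TrivSqZeroExt.fst h
  have h2 := congrArg TrivSqZeroExt.snd h
  simp only [TrivSqZeroExt.fst_add, TrivSqZeroExt.snd_add] at h1 h2
  exact TrivSqZeroExt.ext (by linarith) (by linarith)

lemma two_mul_cancel_dq {a b : DualQuaternion} (h : a + a = b + b) : a = b := by
  have h' : (2 : ℝ) • a = (2 : ℝ) • b := by rw [two_smul, two_smul, h]
  have h2 := congrArg (fun x => (2⁻¹ : ℝ) • x) h'
  simpa [smul_smul] using h2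

/-! ### Products along the cycles of a permutation -/

/-- The ordered product `f 0 * f 1 * ⋯ * f (p - 1)`. -/
def rprod {R : Type*} [Ring R] (f : ℕ → R) (p : ℕ) : R := ((List.range p).map f).prod

section rprod
variable {R : Type*} [Ring R]

lemma rprod_succ (f : ℕ → R) (p : ℕ) : rprod f (p + 1) = rprod f p * f p :=
  List.prod_range_succ f p

lemma rprod_succ_left (f : ℕ → R) (p : ℕ) :
    rprod f (p + 1) = f 0 * rprod (fun t => f (t + 1)) p :=
  List.prod_range_succ' f p

lemma rprod_congr {f g : ℕ → R} {p : ℕ} (h : ∀ t < p, f t = g t) : rprod f p = rprod g p := by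
  unfold rprod
  congr 1
  exact List.map_congr_left fun t ht => h t (List.mem_range.1 ht)

lemma rprod_add (f : ℕ → R) (p q : ℕ) :
    rprod f (p + q) = rprod f p * rprod (fun t => f (p + t)) q := by
  induction q with
  | zero => simp [rprod]
  | succ q ih => rw [← add_assoc, rprod_succ, ih, rprod_succ, mul_assoc]

end rprod

lemma star_rprod (f : ℕ → DualQuaternion) (p : ℕ) :
    star (rprod f p) = rprod (fun t => star (f (p - 1 - t))) p := by
  induction p with
  | zero => simp [rprod, dq_star_one]
  | succ p ih =>
    rw [rprod_succ, dq_star_mul, ih, rprod_succ_left]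
    congr 1
    refine rprod_congr fun t ht => ?_
    congr 2
    omega

/-- The length of the cycle of `σ` through `m`. -/
def per {n : ℕ} (σ : Equiv.Perm (Fin n)) (m : Fin n) : ℕ := Function.minimalPeriod σ m

/-- The product of the entries of `M` along the cycle of `σ` through `m`, read from `m`. -/
def cyc {n : ℕ} {R : Type*} [Ring R] (M : Matrix (Fin n) (Fin n) R)
    (σ : Equiv.Perm (Fin n)) (m : Fin n) : R :=
  rprod (fun t => M ((σ ^ t) m) ((σ ^ (t + 1)) m)) (per σ m)

section cyc
variable {n : ℕ} {R : Type*} [Ring R]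

lemma mem_periodicPts (σ : Equiv.Perm (Fin n)) (m : Fin n) : m ∈ Function.periodicPts σ := by
  refine ⟨orderOf σ, orderOf_pos σ, ?_⟩
  rw [Function.IsPeriodicPt, Function.IsFixedPt, Equiv.Perm.iterate_eq_pow, pow_orderOf_eq_one]
  rfl

lemma per_pos (σ : Equiv.Perm (Fin n)) (m : Fin n) : 0 < per σ m :=
  Function.minimalPeriod_pos_of_mem_periodicPts (mem_periodicPts σ m)

lemma per_le (σ : Equiv.Perm (Fin n)) (m : Fin n) : per σ m ≤ n := by
  simpa [per] using Function.minimalPeriod_le_card (f := σ) (x := m)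

lemma pow_per (σ : Equiv.Perm (Fin n)) (m : Fin n) : (σ ^ per σ m) m = m := by
  rw [← Equiv.Perm.iterate_eq_pow]
  exact Function.iterate_minimalPeriod

lemma pow_ne {σ : Equiv.Perm (Fin n)} {m : Fin n} {t : ℕ} (h0 : t ≠ 0) (h : t < per σ m) :
    (σ ^ t) m ≠ m := by
  rw [← Equiv.Perm.iterate_eq_pow]
  exact Function.not_isPeriodicPt_of_pos_of_lt_minimalPeriod h0 h

lemma per_eq_of {σ : Equiv.Perm (Fin n)} {m : Fin n} {p : ℕ} (hp : 0 < p)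
    (h : (σ ^ p) m = m) (hne : ∀ t, 0 < t → t < p → (σ ^ t) m ≠ m) : per σ m = p := by
  apply le_antisymm
  · apply Function.IsPeriodicPt.minimalPeriod_le hp
    rw [Function.IsPeriodicPt, Function.IsFixedPt, Equiv.Perm.iterate_eq_pow, h]
  · by_contra hlt
    exact hne _ (per_pos σ m) (not_le.1 hlt) (pow_per σ m)

lemma per_congr {σ τ : Equiv.Perm (Fin n)} {m : Fin n}
    (h : ∀ t : ℕ, (τ ^ t) m = m ↔ (σ ^ t) m = m) : per τ m = per σ m :=
  per_eq_of (per_pos σ m) ((h _).2 (pow_per σ m))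
    fun _ h0 ht h' => pow_ne h0.ne' ht ((h _).1 h')

lemma pow_succ_app (σ : Equiv.Perm (Fin n)) (m : Fin n) (t : ℕ) :
    (σ ^ (t + 1)) m = σ ((σ ^ t) m) := by
  rw [pow_succ', Equiv.Perm.mul_apply]

lemma sameCycle_iff_nat {σ : Equiv.Perm (Fin n)} {x y : Fin n} :
    σ.SameCycle x y ↔ ∃ t : ℕ, (σ ^ t) x = y :=
  ⟨fun h => h.exists_nat_pow_eq, fun ⟨t, h⟩ => ⟨t, by simpa using h⟩⟩

lemma sameCycle_iff_lt {σ : Equiv.Perm (Fin n)} {x y : Fin n} :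
    σ.SameCycle x y ↔ ∃ t < per σ x, (σ ^ t) x = y := by
  rw [sameCycle_iff_nat]
  constructor
  · rintro ⟨t, rfl⟩
    refine ⟨t % per σ x, Nat.mod_lt _ (per_pos σ x), ?_⟩
    rw [← Equiv.Perm.iterate_eq_pow, ← Equiv.Perm.iterate_eq_pow]
    exact Function.iterate_mod_minimalPeriod_eq
  · rintro ⟨t, -, h⟩
    exact ⟨t, h⟩

/-- Two permutations that agree on the `σ`-cycle of `m` have the same orbit of `m`. -/
lemma pow_congr {σ τ : Equiv.Perm (Fin n)} {m : Fin n}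
    (h : ∀ x, σ.SameCycle m x → τ x = σ x) (t : ℕ) : (τ ^ t) m = (σ ^ t) m := by
  induction t with
  | zero => rfl
  | succ t ih => rw [pow_succ_app, pow_succ_app, ih, h _ (sameCycle_iff_nat.2 ⟨t, rfl⟩)]

lemma sameCycle_congr {σ τ : Equiv.Perm (Fin n)} {m : Fin n}
    (h : ∀ x, σ.SameCycle m x → τ x = σ x) (x : Fin n) :
    τ.SameCycle m x ↔ σ.SameCycle m x := by
  simp_rw [sameCycle_iff_nat, pow_congr h]

lemma cyc_congr {M N : Matrix (Fin n) (Fin n) R} {σ τ : Equiv.Perm (Fin n)} {m : Fin n}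
    (h : ∀ x, σ.SameCycle m x → τ x = σ x)
    (hM : ∀ x, σ.SameCycle m x → M x (σ x) = N x (σ x)) : cyc M τ m = cyc N σ m := by
  have hp : per τ m = per σ m := per_congr fun t => by rw [pow_congr h]
  unfold cyc
  rw [hp]
  refine rprod_congr fun t _ => ?_
  rw [pow_congr h, pow_congr h, pow_succ_app]
  exact hM _ (sameCycle_iff_nat.2 ⟨t, rfl⟩)

/-- Reading a cycle backwards with conjugate entries conjugates its product. -/
lemma cyc_reverse {M N : Matrix (Fin n) (Fin n) DualQuaternion} {σ τ : Equiv.Perm (Fin n)}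
    {m : Fin n} (h : ∀ t : ℕ, (τ ^ t) m = ((σ⁻¹) ^ t) m)
    (hM : ∀ x, σ.SameCycle m x → N (σ x) x = star (M x (σ x))) :
    cyc N τ m = star (cyc M σ m) := by
  have hp : per τ m = per σ m := per_congr fun t => by
    rw [h, inv_pow, Equiv.Perm.inv_eq_iff_eq, eq_comm]
  have key : ∀ t ≤ per σ m, (τ ^ t) m = (σ ^ (per σ m - t)) m := by
    intro t ht
    rw [h, inv_pow, Equiv.Perm.inv_eq_iff_eq, ← Equiv.Perm.mul_apply, ← pow_add,
      Nat.add_sub_cancel' ht, pow_per]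
  unfold cyc
  rw [star_rprod, hp]
  refine rprod_congr fun t ht => ?_
  rw [key t ht.le, key (t + 1) ht]
  have e1 : per σ m - t = per σ m - 1 - t + 1 := by omega
  have e2 : per σ m - (t + 1) = per σ m - 1 - t := by omega
  rw [e1, e2, pow_succ_app]
  exact hM _ (sameCycle_iff_nat.2 ⟨_, rfl⟩)

lemma dqRe_cyc_apply (M : Matrix (Fin n) (Fin n) DualQuaternion) (σ : Equiv.Perm (Fin n))
    (m : Fin n) : dqRe (cyc M σ (σ m)) = dqRe (cyc M σ m) := by
  have hp : per σ (σ m) = per σ m := Function.minimalPeriod_apply (mem_periodicPts σ m)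
  unfold cyc
  rw [hp]
  obtain ⟨p, hp'⟩ := Nat.exists_eq_succ_of_ne_zero (per_pos σ m).ne'
  have h1 := pow_per σ m
  rw [hp'] at h1 ⊢
  have h2 : ∀ t : ℕ, (σ ^ t) (σ m) = (σ ^ (t + 1)) m := fun t => by
    rw [pow_succ, Equiv.Perm.mul_apply]
  simp only [Nat.succ_eq_add_one, h2] at h1 ⊢
  rw [rprod_succ, rprod_succ_left, dqRe_mul_comm, pow_succ_app _ _ (p + 1), h1]
  simp

/-- The real part of a cycle product does not depend on the starting point. -/
lemma dqRe_cyc_sameCycle (M : Matrix (Fin n) (Fin n) DualQuaternion) {σ : Equiv.Perm (Fin n)}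
    {x y : Fin n} (h : σ.SameCycle x y) : dqRe (cyc M σ x) = dqRe (cyc M σ y) := by
  obtain ⟨t, rfl⟩ := sameCycle_iff_nat.1 h
  induction t with
  | zero => rfl
  | succ t ih => rw [pow_succ_app, dqRe_cyc_apply, ih (sameCycle_iff_nat.2 ⟨t, rfl⟩)]

end cyc

/-! ### Cycle leaders and the commutative determinant -/

section lead
variable {n : ℕ}

open Classical in
/-- The leaders of `σ`: the elements that are the largest in their cycle. -/
def lead (σ : Equiv.Perm (Fin n)) : Finset (Fin n) :=
  Finset.univ.filter fun m => ∀ x, σ.SameCycle m x → x ≤ m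

lemma mem_lead {σ : Equiv.Perm (Fin n)} {m : Fin n} :
    m ∈ lead σ ↔ ∀ x, σ.SameCycle m x → x ≤ m := by
  simp [lead]

/-- The sign `(-1)^(n - r)`, where `r` is the number of cycles of `σ`. -/
def sg (σ : Equiv.Perm (Fin n)) : DualNumber ℝ := (-1) ^ (n - (lead σ).card)

/-- The signed product of the real parts of the cycle products of `M` along `σ`. -/
def cycTerm (M : Matrix (Fin n) (Fin n) DualQuaternion) (σ : Equiv.Perm (Fin n)) : DualNumber ℝ :=
  sg σ * ∏ m ∈ lead σ, dqRe (cyc M σ m)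

/-- The commutative form of the Chen determinant: every cycle product is replaced by its
real part. -/
def redDet (M : Matrix (Fin n) (Fin n) DualQuaternion) : DualNumber ℝ := ∑ σ, cycTerm M σ

open Classical in
/-- Each cycle has exactly one leader. The predicate `Q` cuts out a union of cycles that
contains the cycle of `i`. -/
lemma lead_split (σ : Equiv.Perm (Fin n)) (i : Fin n) (Q : Fin n → Prop)
    (hQ : ∀ x, σ.SameCycle i x → Q x) :
    ∃ l, σ.SameCycle i l ∧ (lead σ).filter Q =
      insert l ((lead σ).filter fun m => Q m ∧ ¬ σ.SameCycle i m) := by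
  let C : Finset (Fin n) := Finset.univ.filter fun x => σ.SameCycle i x
  have hC : C.Nonempty := ⟨i, by simp [C, Equiv.Perm.SameCycle.refl]⟩
  have hl : σ.SameCycle i (C.max' hC) := by
    have := C.max'_mem hC
    simpa [C] using this
  have hmax : ∀ x, σ.SameCycle i x → x ≤ C.max' hC := fun x hx =>
    C.le_max' x (by simpa [C] using hx)
  refine ⟨C.max' hC, hl, ?_⟩
  ext m
  simp only [Finset.mem_filter, Finset.mem_insert, mem_lead]
  constructor
  · rintro ⟨hm, hq⟩
    by_cases h : σ.SameCycle i m
    · left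
      exact le_antisymm (hmax m h) (hm _ (h.symm.trans hl))
    · exact Or.inr ⟨hm, hq, h⟩
  · rintro (rfl | ⟨h1, h2, _⟩)
    · exact ⟨fun x hx => hmax x (hl.trans hx), hQ _ hl⟩
    · exact ⟨h1, h2⟩

open Classical in
lemma prod_lead_split (M : Matrix (Fin n) (Fin n) DualQuaternion) (σ : Equiv.Perm (Fin n))
    (i : Fin n) (Q : Fin n → Prop) (hQ : ∀ x, σ.SameCycle i x → Q x) :
    ∏ m ∈ (lead σ).filter Q, dqRe (cyc M σ m) = dqRe (cyc M σ i) *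
      ∏ m ∈ (lead σ).filter (fun m => Q m ∧ ¬ σ.SameCycle i m), dqRe (cyc M σ m) := by
  obtain ⟨l, hl, h⟩ := lead_split σ i Q hQ
  rw [h, Finset.prod_insert (by simp [hl]), dqRe_cyc_sameCycle M hl]

open Classical in
lemma card_lead_split (σ : Equiv.Perm (Fin n))
    (i : Fin n) (Q : Fin n → Prop) (hQ : ∀ x, σ.SameCycle i x → Q x) :
    ((lead σ).filter Q).card =
      ((lead σ).filter (fun m => Q m ∧ ¬ σ.SameCycle i m)).card + 1 := by
  obtain ⟨l, hl, h⟩ := lead_split σ i Q hQ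
  rw [h, Finset.card_insert_of_notMem (by simp [hl])]

open Classical in
lemma cycTerm_split (M : Matrix (Fin n) (Fin n) DualQuaternion) (σ : Equiv.Perm (Fin n))
    (i : Fin n) : cycTerm M σ = sg σ * (dqRe (cyc M σ i) *
      ∏ m ∈ (lead σ).filter (fun m => ¬ σ.SameCycle i m), dqRe (cyc M σ m)) := by
  have h := prod_lead_split M σ i (fun _ => True) (fun _ _ => trivial)
  simp only [Finset.filter_true, true_and] at h
  rw [cycTerm, h]

lemma lead_congr {σ τ : Equiv.Perm (Fin n)}
    (h : ∀ x y, τ.SameCycle x y ↔ σ.SameCycle x y) : lead τ = lead σ := by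
  ext m
  simp [mem_lead, h]

lemma sg_congr {σ τ : Equiv.Perm (Fin n)}
    (h : ∀ x y, τ.SameCycle x y ↔ σ.SameCycle x y) : sg τ = sg σ := by
  rw [sg, sg, lead_congr h]

lemma redDet_conjTranspose (M : Matrix (Fin n) (Fin n) DualQuaternion) :
    redDet Mᴴ = redDet M := by
  unfold redDet
  rw [← Equiv.sum_comp (Equiv.inv (Equiv.Perm (Fin n)))]
  refine Finset.sum_congr rfl fun σ _ => ?_
  have h : ∀ x y, (σ⁻¹).SameCycle x y ↔ σ.SameCycle x y := fun x y => Equiv.Perm.sameCycle_inv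
  simp only [Equiv.inv_apply, cycTerm]
  rw [lead_congr h, sg_congr h]
  congr 1
  refine Finset.prod_congr rfl fun m _ => ?_
  rw [cyc_reverse (M := M) (N := Mᴴ) (σ := σ) (τ := σ⁻¹) (fun t => rfl) (fun x _ => rfl),
    dqRe_star]

open Classical in
/-- The permutation obtained from `σ` by reversing the cycle through `k`. -/
def rev (k : Fin n) (σ : Equiv.Perm (Fin n)) : Equiv.Perm (Fin n) where
  toFun x := if σ.SameCycle k x then σ⁻¹ x else σ x
  invFun x := if σ.SameCycle k x then σ x else σ⁻¹ x
  left_inv x := by by_cases h : σ.SameCycle k x <;> simp [h]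
  right_inv x := by by_cases h : σ.SameCycle k x <;> simp [h]

lemma rev_of_same {k x : Fin n} {σ : Equiv.Perm (Fin n)} (h : σ.SameCycle k x) :
    rev k σ x = σ⁻¹ x := by
  simp [rev, h]

lemma rev_of_not {k x : Fin n} {σ : Equiv.Perm (Fin n)} (h : ¬ σ.SameCycle k x) :
    rev k σ x = σ x := by
  simp [rev, h]

lemma rev_agree_same {k x : Fin n} {σ : Equiv.Perm (Fin n)} (h : σ.SameCycle k x) :
    ∀ y, (σ⁻¹).SameCycle x y → rev k σ y = σ⁻¹ y := fun _ hy =>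
  rev_of_same (h.trans (Equiv.Perm.sameCycle_inv.1 hy))

lemma rev_agree_not {k x : Fin n} {σ : Equiv.Perm (Fin n)} (h : ¬ σ.SameCycle k x) :
    ∀ y, σ.SameCycle x y → rev k σ y = σ y := fun _ hy =>
  rev_of_not fun h' => h (h'.trans hy.symm)

lemma rev_sameCycle (k : Fin n) (σ : Equiv.Perm (Fin n)) (x y : Fin n) :
    (rev k σ).SameCycle x y ↔ σ.SameCycle x y := by
  by_cases h : σ.SameCycle k x
  · rw [sameCycle_congr (rev_agree_same h), Equiv.Perm.sameCycle_inv]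
  · exact sameCycle_congr (rev_agree_not h) y

lemma rev_rev (k : Fin n) (σ : Equiv.Perm (Fin n)) : rev k (rev k σ) = σ := by
  ext1 x
  by_cases h : σ.SameCycle k x
  · rw [rev_of_same ((rev_sameCycle k σ k x).2 h), Equiv.Perm.inv_eq_iff_eq,
      rev_of_same (by simpa using h)]
    simp
  · rw [rev_of_not (mt (rev_sameCycle k σ k x).1 h), rev_of_not h]

lemma cyc_rev_self {M : Matrix (Fin n) (Fin n) DualQuaternion} {σ : Equiv.Perm (Fin n)}
    {k : Fin n} (hM : ∀ x, σ.SameCycle k x → M (σ x) x = star (M x (σ x))) :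
    cyc M (rev k σ) k = star (cyc M σ k) :=
  cyc_reverse (pow_congr (rev_agree_same (Equiv.Perm.SameCycle.refl σ k))) hM

lemma cyc_rev_of_not {R : Type*} [Ring R] (M : Matrix (Fin n) (Fin n) R)
    {σ : Equiv.Perm (Fin n)} {k m : Fin n} (h : ¬ σ.SameCycle k m) :
    cyc M (rev k σ) m = cyc M σ m :=
  cyc_congr (rev_agree_not h) fun _ _ => rfl

lemma sum_rev {K : Type*} [AddCommMonoid K] (k : Fin n) (f : Equiv.Perm (Fin n) → K) :
    ∑ σ, f (rev k σ) = ∑ σ, f σ :=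
  Equiv.sum_comp (Function.Involutive.toPerm (rev k) (rev_rev k)) f

end lead

/-! ### The Chen determinant of a Hermitian matrix in commutative form -/

section chen
variable {n : ℕ}

lemma takeWhile_map_range {β : Type*} (f : ℕ → β) (q : β → Bool) {m N : ℕ} (hm : m < N)
    (h : ∀ k < m, q (f k) = true) (h' : q (f m) = false) :
    ((List.range N).map f).takeWhile q = (List.range m).map f := by
  obtain ⟨d, rfl⟩ : ∃ d, N = m + (d + 1) := ⟨N - m - 1, by omega⟩
  rw [List.range_add, List.map_append, List.takeWhile_append_of_pos]
  · rw [List.range_succ_eq_map]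
    simp [h']
  · intro a ha
    obtain ⟨k, hk, rfl⟩ := List.mem_map.1 ha
    exact h k (List.mem_range.1 hk)

lemma cycleList_eq (σ : Equiv.Perm (Fin n)) (m : Fin n) :
    cycleList σ m = (List.range (per σ m)).map fun t => (σ ^ t) m := by
  obtain ⟨p, hp⟩ := Nat.exists_eq_succ_of_ne_zero (per_pos σ m).ne'
  have hle := per_le σ m
  unfold cycleList
  rw [takeWhile_map_range (m := p) _ _ (by omega), hp, Nat.succ_eq_add_one,
    List.range_succ_eq_map]
  · simp [Function.comp_def]
  · intro k hk
    simpa using pow_ne (σ := σ) (m := m) (t := k + 1) (by omega) (by omega)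
  · have := pow_per σ m
    rw [hp] at this
    simpa using this

lemma mem_cycleList {σ : Equiv.Perm (Fin n)} {m x : Fin n} :
    x ∈ cycleList σ m ↔ σ.SameCycle m x := by
  rw [cycleList_eq, sameCycle_iff_lt]
  simp

lemma mem_chenLeaders {σ : Equiv.Perm (Fin n)} {m : Fin n} :
    m ∈ chenLeaders σ ↔ m ∈ lead σ := by
  simp [chenLeaders, mem_lead, mem_cycleList]

lemma nodup_chenLeaders (σ : Equiv.Perm (Fin n)) : (chenLeaders σ).Nodup := by
  unfold chenLeaders
  rw [List.nodup_reverse]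
  exact (List.nodup_finRange n).filter _

lemma toFinset_chenLeaders (σ : Equiv.Perm (Fin n)) : (chenLeaders σ).toFinset = lead σ := by
  ext m
  simp [mem_chenLeaders]

lemma chenLeaders_congr {σ τ : Equiv.Perm (Fin n)}
    (h : ∀ x y, τ.SameCycle x y ↔ σ.SameCycle x y) : chenLeaders τ = chenLeaders σ := by
  unfold chenLeaders
  congr 1
  refine List.filter_congr fun m _ => ?_
  rw [Bool.eq_iff_iff]
  simp [mem_cycleList, h]

lemma chenOrder_prod (A : Matrix (Fin n) (Fin n) DualQuaternion) (σ : Equiv.Perm (Fin n)) :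
    ((chenOrder σ).map fun i => A i (σ i)).prod = ((chenLeaders σ).map (cyc A σ)).prod := by
  unfold chenOrder
  rw [List.map_flatten, List.prod_flatten, List.map_map, List.map_map]
  congr 1
  refine List.map_congr_left fun m _ => ?_
  simp only [Function.comp_apply, cycleList_eq, List.map_map, cyc, rprod]
  congr 1
  refine List.map_congr_left fun t _ => ?_
  simp only [Function.comp_apply, pow_succ_app]

open Classical in
/-- The `σ`-term of the Chen determinant in which the cycle products with leader in `S` are
replaced by their real parts. -/
def mixed (A : Matrix (Fin n) (Fin n) DualQuaternion) (S : Finset (Fin n))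
    (σ : Equiv.Perm (Fin n)) : DualQuaternion :=
  (-1) ^ (n - (chenLeaders σ).length) * ((chenLeaders σ).map fun m =>
    if m ∈ S then toDQHom (dqRe (cyc A σ m)) else cyc A σ m).prod

/-- Averaging over the reversal of the cycle of `k` replaces its product by the real part. -/
lemma mixed_add_rev {A : Matrix (Fin n) (Fin n) DualQuaternion} (hA : Aᴴ = A)
    {S : Finset (Fin n)} {k : Fin n} (hk : k ∉ S) (σ : Equiv.Perm (Fin n))
    (hl : k ∈ chenLeaders σ) :
    mixed A S σ + mixed A S (rev k σ) = mixed A (insert k S) σ + mixed A (insert k S) σ := by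
  obtain ⟨l₁, l₂, hL⟩ := List.append_of_mem hl
  have hnd := nodup_chenLeaders σ
  have hlead : ∀ m ∈ chenLeaders σ, m ≠ k → ¬ σ.SameCycle k m := by
    intro m hm hmk hs
    rw [mem_chenLeaders, mem_lead] at hm hl
    exact hmk (le_antisymm (hl m hs) (hm k hs.symm))
  rw [hL, List.nodup_middle, List.nodup_cons, List.mem_append, not_or] at hnd
  unfold mixed
  rw [chenLeaders_congr (rev_sameCycle k σ)]
  rw [hL] at hlead ⊢
  set c : DualQuaternion := (-1) ^ (n - (l₁ ++ k :: l₂).length)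
  have e1 : ∀ l : List (Fin n), (∀ m ∈ l, m ∈ l₁ ++ k :: l₂) → k ∉ l →
      (l.map fun m => if m ∈ S then toDQHom (dqRe (cyc A (rev k σ) m))
        else cyc A (rev k σ) m) =
      l.map fun m => if m ∈ S then toDQHom (dqRe (cyc A σ m)) else cyc A σ m := by
    intro l hl' hkl
    refine List.map_congr_left fun m hm => ?_
    rw [cyc_rev_of_not A (hlead m (hl' m hm) fun h => hkl (h ▸ hm))]
  have e2 : ∀ l : List (Fin n), k ∉ l →
      (l.map fun m => if m ∈ insert k S then toDQHom (dqRe (cyc A σ m)) else cyc A σ m) =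
      l.map fun m => if m ∈ S then toDQHom (dqRe (cyc A σ m)) else cyc A σ m := by
    intro l hkl
    refine List.map_congr_left fun m hm => ?_
    have : m ≠ k := fun h => hkl (h ▸ hm)
    simp [this]
  simp only [List.map_append, List.map_cons, List.prod_append, List.prod_cons]
  rw [e1 l₁ (by simp +contextual) hnd.1.1, e1 l₂ (by simp +contextual) hnd.1.2,
    e2 l₁ hnd.1.1, e2 l₂ hnd.1.2]
  have hstar : cyc A (rev k σ) k = star (cyc A σ k) :=
    cyc_rev_self fun x _ => by
      conv_lhs => rw [← hA]
      rfl
  have h2 := add_star_eq (cyc A σ k)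
  rw [two_mul, map_add] at h2
  simp only [hk, if_false, Finset.mem_insert_self, if_true, hstar]
  rw [← mul_add, ← mul_add, ← mul_add, ← mul_add, ← add_mul, ← add_mul, h2]

lemma mixed_of_not {A : Matrix (Fin n) (Fin n) DualQuaternion}
    {S : Finset (Fin n)} {k : Fin n} (σ : Equiv.Perm (Fin n))
    (hl : k ∉ chenLeaders σ) : mixed A (insert k S) σ = mixed A S σ := by
  unfold mixed
  congr 2
  refine List.map_congr_left fun m hm => ?_
  have : m ≠ k := fun h => hl (h ▸ hm)
  simp [this]

lemma sum_mixed {A : Matrix (Fin n) (Fin n) DualQuaternion} (hA : Aᴴ = A)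
    (S : Finset (Fin n)) : ∑ σ, mixed A S σ = ∑ σ, mixed A ∅ σ := by
  classical
  induction S using Finset.induction_on with
  | empty => rfl
  | insert k S hk ih =>
    rw [← ih]
    let f : Equiv.Perm (Fin n) → DualQuaternion := fun σ =>
      if k ∈ chenLeaders σ then mixed A S σ else 0
    let g : Equiv.Perm (Fin n) → DualQuaternion := fun σ =>
      if k ∈ chenLeaders σ then mixed A (insert k S) σ else 0
    have hfg : ∑ σ, f σ = ∑ σ, g σ := by
      apply two_mul_cancel_dq
      conv_lhs => rhs; rw [← sum_rev k f]
      rw [← Finset.sum_add_distrib, ← Finset.sum_add_distrib]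
      refine Finset.sum_congr rfl fun σ _ => ?_
      simp only [f, g, chenLeaders_congr (rev_sameCycle k σ)]
      split_ifs with h
      · exact mixed_add_rev hA hk σ h
      · rfl
    have h1 : ∀ σ, mixed A (insert k S) σ - g σ = mixed A S σ - f σ := by
      intro σ
      simp only [f, g]
      split_ifs with h
      · simp
      · rw [mixed_of_not σ h]
    have h2 : ∑ σ, (mixed A (insert k S) σ - g σ) = ∑ σ, (mixed A S σ - f σ) :=
      Finset.sum_congr rfl fun σ _ => h1 σ
    rw [Finset.sum_sub_distrib, Finset.sum_sub_distrib, hfg] at h2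
    exact sub_left_injective h2

/-- For a Hermitian matrix the Chen determinant equals its commutative form. -/
lemma Cdet_eq_redDet {A : Matrix (Fin n) (Fin n) DualQuaternion} (hA : Aᴴ = A) :
    Cdet A = toDQHom (redDet A) := by
  have h0 : Cdet A = ∑ σ, mixed A ∅ σ := by
    unfold Cdet mixed
    refine Finset.sum_congr rfl fun σ _ => ?_
    rw [chenOrder_prod]
    simp
  rw [h0, ← sum_mixed hA Finset.univ, redDet, map_sum]
  refine Finset.sum_congr rfl fun σ _ => ?_
  unfold mixed cycTerm sg
  rw [map_mul, map_pow, map_neg, map_one, ← toFinset_chenLeaders,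
    List.toFinset_card_of_nodup (nodup_chenLeaders σ),
    List.prod_toFinset _ (nodup_chenLeaders σ), map_list_prod, List.map_map]
  simp [Function.comp_def]

end chen

/-! ### Merging two cycles and the vanishing of dependent columns -/

section column
variable {n : ℕ}

/-- The cycle product at `i` with its last factor, the only one in column `i`, split off. -/
lemma cyc_last {R : Type*} [Ring R] (M : Matrix (Fin n) (Fin n) R) (σ : Equiv.Perm (Fin n))
    (i : Fin n) : cyc M σ i =
      rprod (fun t => M ((σ ^ t) i) ((σ ^ (t + 1)) i)) (per σ i - 1) *
        M ((σ ^ (per σ i - 1)) i) i := by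
  have h : per σ i - 1 + 1 = per σ i := Nat.sub_add_cancel (per_pos σ i)
  unfold cyc
  conv_lhs => rw [← h]
  rw [rprod_succ, h, pow_per]

lemma rprod_init_congr {R : Type*} [Ring R] {M N : Matrix (Fin n) (Fin n) R}
    (σ : Equiv.Perm (Fin n)) {i : Fin n} (h : ∀ k l, l ≠ i → M k l = N k l) :
    rprod (fun t => M ((σ ^ t) i) ((σ ^ (t + 1)) i)) (per σ i - 1) =
      rprod (fun t => N ((σ ^ t) i) ((σ ^ (t + 1)) i)) (per σ i - 1) :=
  rprod_congr fun _ _ => h _ _ (pow_ne (by omega) (by omega))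

/-- The commutative determinant is additive in column `i`. -/
lemma redDet_add_column {M₁ M₂ M₃ : Matrix (Fin n) (Fin n) DualQuaternion} {i : Fin n}
    (h₂ : ∀ k l, l ≠ i → M₁ k l = M₂ k l) (h₃ : ∀ k l, l ≠ i → M₁ k l = M₃ k l)
    (hi : ∀ k, M₁ k i = M₂ k i + M₃ k i) : redDet M₁ = redDet M₂ + redDet M₃ := by
  classical
  unfold redDet
  rw [← Finset.sum_add_distrib]
  refine Finset.sum_congr rfl fun σ _ => ?_
  have hc : cyc M₁ σ i = cyc M₂ σ i + cyc M₃ σ i := by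
    rw [cyc_last M₁, cyc_last M₂, cyc_last M₃, ← rprod_init_congr σ h₂,
      ← rprod_init_congr σ h₃, hi, mul_add]
  have ho : ∀ N : Matrix (Fin n) (Fin n) DualQuaternion, (∀ k l, l ≠ i → M₁ k l = N k l) →
      ∏ m ∈ (lead σ).filter (fun m => ¬ σ.SameCycle i m), dqRe (cyc M₁ σ m) =
      ∏ m ∈ (lead σ).filter (fun m => ¬ σ.SameCycle i m), dqRe (cyc N σ m) := by
    intro N hN
    refine Finset.prod_congr rfl fun m hm => ?_
    rw [cyc_congr (M := M₁) (N := N) (fun _ _ => rfl) fun x hx => hN _ _ ?_]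
    rintro rfl
    exact (Finset.mem_filter.1 hm).2 (by simpa using hx.symm)
  rw [cycTerm_split M₁ σ i, cycTerm_split M₂ σ i, cycTerm_split M₃ σ i, ← ho M₂ h₂, ← ho M₃ h₃, hc,
    dqRe_add]
  ring

section merge
variable {σ : Equiv.Perm (Fin n)} {i j : Fin n}

lemma merge_apply_of_ne {x : Fin n} (hi : σ x ≠ i) (hj : σ x ≠ j) :
    (Equiv.swap i j * σ) x = σ x := by
  rw [Equiv.Perm.mul_apply, Equiv.swap_apply_of_ne_of_ne hi hj]

lemma merge_pow_left (h : ¬ σ.SameCycle i j) {t : ℕ} (ht : t < per σ i) :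
    ((Equiv.swap i j * σ) ^ t) i = (σ ^ t) i := by
  induction t with
  | zero => rfl
  | succ t ih =>
    rw [pow_succ_app, ih (by omega), merge_apply_of_ne, pow_succ_app]
    · rw [← pow_succ_app]
      exact pow_ne (by omega) ht
    · rw [← pow_succ_app]
      exact fun h' => h (sameCycle_iff_nat.2 ⟨_, h'⟩)

lemma merge_pow_mid (h : ¬ σ.SameCycle i j) :
    ((Equiv.swap i j * σ) ^ (per σ i)) i = j := by
  have h1 : per σ i = per σ i - 1 + 1 := (Nat.sub_add_cancel (per_pos σ i)).symm
  have h2 := pow_per σ i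
  have h3 := per_pos σ i
  rw [h1, pow_succ_app] at h2
  rw [h1, pow_succ_app, merge_pow_left h (by omega), Equiv.Perm.mul_apply, h2,
    Equiv.swap_apply_left]

lemma merge_pow_right (h : ¬ σ.SameCycle i j) {t : ℕ} (ht : t < per σ j) :
    ((Equiv.swap i j * σ) ^ (per σ i + t)) i = (σ ^ t) j := by
  induction t with
  | zero => exact merge_pow_mid h
  | succ t ih =>
    rw [← add_assoc, pow_succ_app, ih (by omega), merge_apply_of_ne, pow_succ_app]
    · rw [← pow_succ_app]
      exact fun h' => h (sameCycle_iff_nat.2 ⟨_, h'⟩ : σ.SameCycle j i).symm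
    · rw [← pow_succ_app]
      exact pow_ne (by omega) ht

lemma merge_pow_end (h : ¬ σ.SameCycle i j) :
    ((Equiv.swap i j * σ) ^ (per σ i + per σ j)) i = i := by
  have h1 : per σ j = per σ j - 1 + 1 := (Nat.sub_add_cancel (per_pos σ j)).symm
  have h2 := pow_per σ j
  have h3 := per_pos σ j
  rw [h1, pow_succ_app] at h2
  rw [h1, ← add_assoc, pow_succ_app, merge_pow_right h (by omega), Equiv.Perm.mul_apply, h2,
    Equiv.swap_apply_right]

lemma merge_per (h : ¬ σ.SameCycle i j) :
    per (Equiv.swap i j * σ) i = per σ i + per σ j := by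
  refine per_eq_of (by have := per_pos σ i; omega) (merge_pow_end h) fun t h0 ht => ?_
  by_cases htp : t < per σ i
  · rw [merge_pow_left h htp]
    exact pow_ne h0.ne' htp
  · obtain ⟨s, rfl⟩ := Nat.exists_eq_add_of_le (not_lt.1 htp)
    rw [merge_pow_right h (by omega)]
    exact fun h' => h (sameCycle_iff_nat.2 ⟨_, h'⟩ : σ.SameCycle j i).symm

lemma merge_sameCycle (h : ¬ σ.SameCycle i j) (x : Fin n) :
    (Equiv.swap i j * σ).SameCycle i x ↔ σ.SameCycle i x ∨ σ.SameCycle j x := by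
  simp only [sameCycle_iff_lt]
  rw [merge_per h]
  constructor
  · rintro ⟨t, ht, rfl⟩
    by_cases htp : t < per σ i
    · exact Or.inl ⟨t, htp, (merge_pow_left h htp).symm⟩
    · obtain ⟨s, rfl⟩ := Nat.exists_eq_add_of_le (not_lt.1 htp)
      exact Or.inr ⟨s, by omega, (merge_pow_right h (by omega)).symm⟩
  · rintro (⟨t, ht, rfl⟩ | ⟨t, ht, rfl⟩)
    · exact ⟨t, by omega, merge_pow_left h ht⟩
    · exact ⟨per σ i + t, by omega, merge_pow_right h ht⟩

lemma merge_agree {m : Fin n} (hi : ¬ σ.SameCycle i m) (hj : ¬ σ.SameCycle j m) :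
    ∀ x, σ.SameCycle m x → (Equiv.swap i j * σ) x = σ x := by
  intro x hx
  refine merge_apply_of_ne ?_ ?_
  · rintro rfl
    exact hi (by simpa using hx.symm)
  · rintro rfl
    exact hj (by simpa using hx.symm)

open Classical in
lemma merge_lead (h : ¬ σ.SameCycle i j) :
    (lead (Equiv.swap i j * σ)).filter (fun m => ¬ (Equiv.swap i j * σ).SameCycle i m) =
      (lead σ).filter (fun m => ¬ σ.SameCycle i m ∧ ¬ σ.SameCycle j m) := by
  ext m
  simp only [Finset.mem_filter, merge_sameCycle h, not_or, mem_lead]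
  refine and_congr_left fun hm => ?_
  simp only [sameCycle_congr (merge_agree hm.1 hm.2)]

/-- Merging two cycles lowers the number of cycles by one. -/
lemma merge_sg (h : ¬ σ.SameCycle i j) : sg (Equiv.swap i j * σ) = - sg σ := by
  classical
  have h1 := card_lead_split (Equiv.swap i j * σ) i (fun _ => True) (fun _ _ => trivial)
  have h2 := card_lead_split σ i (fun _ => True) (fun _ _ => trivial)
  have h3 : ((lead σ).filter fun m => ¬ σ.SameCycle i m).card =
      ((lead σ).filter fun m => ¬ σ.SameCycle i m ∧ ¬ σ.SameCycle j m).card + 1 := by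
    convert card_lead_split σ j (fun m => ¬ σ.SameCycle i m)
      (fun x hx hx' => h (hx'.trans hx.symm))
  simp only [Finset.filter_true, true_and] at h1 h2
  rw [merge_lead h] at h1
  have h4 : (lead σ).card ≤ n := by simpa using (lead σ).card_le_univ
  unfold sg
  have h5 : n - (lead (Equiv.swap i j * σ)).card = n - (lead σ).card + 1 := by omega
  rw [h5, pow_succ]
  ring

lemma cut_sameCycle (hij : i ≠ j) (h : σ.SameCycle i j) :
    ¬ (Equiv.swap i j * σ).SameCycle i j := by
  classical
  have hex := sameCycle_iff_nat.1 h
  let k := Nat.find hex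
  have hk : (σ ^ k) i = j := Nat.find_spec hex
  have hmin : ∀ t < k, (σ ^ t) i ≠ j := fun t ht => Nat.find_min hex ht
  have hk0 : 0 < k := Nat.pos_of_ne_zero fun h0 => hij (by rw [h0] at hk; exact hk)
  have hkp : k < per σ i := by
    obtain ⟨t, ht, he⟩ := sameCycle_iff_lt.1 h
    exact (Nat.find_min' hex he).trans_lt ht
  have h1 : ∀ t < k, ((Equiv.swap i j * σ) ^ t) i = (σ ^ t) i := by
    intro t ht
    induction t with
    | zero => rfl
    | succ t ih =>
      rw [pow_succ_app, ih (by omega), merge_apply_of_ne, pow_succ_app]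
      · rw [← pow_succ_app]
        exact pow_ne (by omega) (by omega)
      · rw [← pow_succ_app]
        exact hmin _ ht
  have h2 : ((Equiv.swap i j * σ) ^ k) i = i := by
    have e : k = k - 1 + 1 := by omega
    rw [e, pow_succ_app] at hk
    rw [e, pow_succ_app, h1 _ (by omega), Equiv.Perm.mul_apply, hk, Equiv.swap_apply_right]
  have hper : per (Equiv.swap i j * σ) i = k :=
    per_eq_of hk0 h2 fun t h0 ht => by
      rw [h1 t ht]
      exact pow_ne h0.ne' (by omega)
  rw [sameCycle_iff_lt, hper]
  rintro ⟨t, ht, he⟩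
  rw [h1 t ht] at he
  exact hmin t ht he

end merge

/-- The matrix `M` with column `i` replaced by column `j`. -/
def copyCol (M : Matrix (Fin n) (Fin n) DualQuaternion) (i j : Fin n) :
    Matrix (Fin n) (Fin n) DualQuaternion := fun k l => M k (if l = i then j else l)

variable {M : Matrix (Fin n) (Fin n) DualQuaternion} {i j : Fin n} {α : DualQuaternion}

lemma copyCol_of_ne (k l : Fin n) (h : l ≠ i) : copyCol M i j k l = M k l := by
  simp [copyCol, h]

lemma copyCol_self (k : Fin n) : copyCol M i j k i = M k j := by
  simp [copyCol]

lemma cyc_dependent (hcol : ∀ k, M k i = M k j * α) (σ : Equiv.Perm (Fin n)) :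
    cyc M σ i = cyc (copyCol M i j) σ i * α := by
  rw [cyc_last M, cyc_last (copyCol M i j), rprod_init_congr σ copyCol_of_ne, copyCol_self,
    hcol, mul_assoc]

/-- The product along the merged cycle. -/
lemma cyc_merge (hcol : ∀ k, M k i = M k j * α) {σ : Equiv.Perm (Fin n)}
    (h : ¬ σ.SameCycle i j) : cyc M (Equiv.swap i j * σ) i =
      cyc (copyCol M i j) σ i * (cyc M σ j * α) := by
  have hp := per_pos σ i
  have hq := per_pos σ j
  conv_lhs => unfold cyc
  rw [merge_per h, rprod_add]
  congr 1
  · rw [cyc_last (copyCol M i j), rprod_init_congr σ copyCol_of_ne, copyCol_self]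
    have e : per σ i = per σ i - 1 + 1 := (Nat.sub_add_cancel hp).symm
    conv_lhs => rw [e]
    rw [rprod_succ, ← e, merge_pow_mid h, merge_pow_left h (by omega)]
    congr 1
    refine rprod_congr fun t ht => ?_
    rw [merge_pow_left h (by omega), merge_pow_left h (by omega)]
  · rw [cyc_last M σ j, mul_assoc, ← hcol]
    have e : per σ j = per σ j - 1 + 1 := (Nat.sub_add_cancel hq).symm
    conv_lhs => rw [e]
    rw [rprod_succ, add_assoc, ← e, merge_pow_end h, merge_pow_right h (by omega)]
    congr 1
    refine rprod_congr fun t ht => ?_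
    rw [merge_pow_right h (by omega), add_assoc, merge_pow_right h (by omega)]

open Classical in
/-- The contribution to the commutative determinant of a permutation `σ` in which `i` and `j` lie
in different cycles, together with the permutation obtained by merging these two cycles. -/
lemma cycTerm_add_merge (hcol : ∀ k, M k i = M k j * α) {σ : Equiv.Perm (Fin n)}
    (h : ¬ σ.SameCycle i j) : cycTerm M σ + cycTerm M (Equiv.swap i j * σ) =
      sg σ * ((dqRe (cyc (copyCol M i j) σ i * α) * dqRe (cyc M σ j) -
        dqRe (cyc (copyCol M i j) σ i * (cyc M σ j * α))) *
        ∏ m ∈ (lead σ).filter (fun m => ¬ σ.SameCycle i m ∧ ¬ σ.SameCycle j m),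
          dqRe (cyc M σ m)) := by
  have hs : ∏ m ∈ (lead σ).filter (fun m => ¬ σ.SameCycle i m), dqRe (cyc M σ m) =
      dqRe (cyc M σ j) *
        ∏ m ∈ (lead σ).filter (fun m => ¬ σ.SameCycle i m ∧ ¬ σ.SameCycle j m),
          dqRe (cyc M σ m) := by
    convert prod_lead_split M σ j (fun m => ¬ σ.SameCycle i m)
      (fun x hx hx' => h (hx'.trans hx.symm))
  have hprod : ∏ m ∈ (lead σ).filter (fun m => ¬ σ.SameCycle i m ∧ ¬ σ.SameCycle j m),
      dqRe (cyc M (Equiv.swap i j * σ) m) =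
      ∏ m ∈ (lead σ).filter (fun m => ¬ σ.SameCycle i m ∧ ¬ σ.SameCycle j m),
        dqRe (cyc M σ m) := by
    refine Finset.prod_congr rfl fun m hm => ?_
    obtain ⟨_, h1, h2⟩ := Finset.mem_filter.1 hm
    rw [cyc_congr (merge_agree h1 h2) fun _ _ => rfl]
  rw [cycTerm_split M σ i, cycTerm_split M (Equiv.swap i j * σ) i, merge_lead h, merge_sg h,
    cyc_merge hcol h, cyc_dependent hcol, hprod, hs]
  ring

/-- The commutative determinant vanishes when column `i` is a right multiple of column `j` and the
matrix is Hermitian away from the index `i`. -/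
lemma redDet_dependent (hij : i ≠ j) (hcol : ∀ k, M k i = M k j * α)
    (hM : ∀ k l, k ≠ i → l ≠ i → M k l = star (M l k)) : redDet M = 0 := by
  classical
  let f : Equiv.Perm (Fin n) → DualNumber ℝ := fun σ =>
    if σ.SameCycle i j then 0 else cycTerm M σ + cycTerm M (Equiv.swap i j * σ)
  have hf : redDet M = ∑ σ, f σ := by
    have h1 : redDet M = ∑ σ, (if σ.SameCycle i j then 0 else cycTerm M σ) +
        ∑ σ : Equiv.Perm (Fin n), (if σ.SameCycle i j then cycTerm M σ else 0) := by
      rw [← Finset.sum_add_distrib]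
      refine Finset.sum_congr rfl fun σ _ => ?_
      split_ifs <;> simp
    rw [h1, ← Equiv.sum_comp (Equiv.mulLeft (Equiv.swap i j))
      (fun σ : Equiv.Perm (Fin n) => if σ.SameCycle i j then cycTerm M σ else 0),
      ← Finset.sum_add_distrib]
    refine Finset.sum_congr rfl fun σ _ => ?_
    simp only [Equiv.coe_mulLeft, f]
    by_cases h : σ.SameCycle i j
    · simp [h, cut_sameCycle hij h]
    · have : (Equiv.swap i j * σ).SameCycle i j :=
        (merge_sameCycle h j).2 (Or.inr (Equiv.Perm.SameCycle.refl σ j))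
      simp [h, this]
  -- Reversing the cycle of `j` conjugates its product, so the two contributions cancel.
  have hrev : ∀ σ, f σ + f (rev j σ) = 0 := by
    intro σ
    simp only [f, rev_sameCycle]
    split_ifs with h
    · simp
    have h' : ¬ (rev j σ).SameCycle i j := by rwa [rev_sameCycle]
    have hji : ¬ σ.SameCycle j i := fun hs => h hs.symm
    have hstar : cyc M (rev j σ) j = star (cyc M σ j) := by
      refine cyc_rev_self fun x hx => hM _ _ ?_ ?_
      · rintro rfl
        exact hji (by simpa using hx)
      · rintro rfl
        exact hji hx
    have hprod : ∏ m ∈ (lead σ).filter (fun m => ¬ σ.SameCycle i m ∧ ¬ σ.SameCycle j m),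
        dqRe (cyc M (rev j σ) m) =
        ∏ m ∈ (lead σ).filter (fun m => ¬ σ.SameCycle i m ∧ ¬ σ.SameCycle j m),
          dqRe (cyc M σ m) :=
      Finset.prod_congr rfl fun m hm => by
        rw [cyc_rev_of_not M (Finset.mem_filter.1 hm).2.2]
    rw [cycTerm_add_merge hcol h, cycTerm_add_merge hcol h']
    simp only [rev_sameCycle, lead_congr (rev_sameCycle j σ), sg_congr (rev_sameCycle j σ)]
    rw [hprod, hstar, cyc_rev_of_not _ hji, dqRe_star]
    set X := cyc (copyCol M i j) σ i
    set Y := cyc M σ j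
    have key : dqRe (X * (Y * α)) + dqRe (X * (star Y * α)) = 2 * (dqRe (X * α) * dqRe Y) := by
      rw [← dqRe_add, ← mul_add, ← add_mul, add_star_eq, ← mul_assoc, ← toDQHom_comm, mul_assoc,
        dqRe_toDQHom_mul]
      ring
    linear_combination (-(sg σ) *
      ∏ m ∈ (lead σ).filter (fun m => ¬ σ.SameCycle i m ∧ ¬ σ.SameCycle j m),
          dqRe (cyc M σ m)) * key
  rw [hf]
  apply two_mul_cancel_dn
  conv_lhs => rhs; rw [← sum_rev j f]
  rw [← Finset.sum_add_distrib, Finset.sum_eq_zero fun σ _ => hrev σ, add_zero]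

lemma mul_addMatrix_apply (M : Matrix (Fin n) (Fin n) DualQuaternion) (i j : Fin n)
    (α : DualQuaternion) (k l : Fin n) :
    (M * addMatrix i j α) k l = M k l + if l = i then M k j * α else 0 := by
  rw [Matrix.mul_apply]
  simp only [addMatrix, Matrix.of_apply, mul_add, Finset.sum_add_distrib, mul_ite, mul_one,
    mul_zero, Finset.sum_ite_eq', Finset.mem_univ, if_true]
  congr 1
  by_cases h : l = i <;> simp [h]

/-- Adding a right multiple of column `j` to column `i` does not change the commutative
determinant of a matrix that is Hermitian away from the index `i`. -/
lemma redDet_mul_addMatrix (hij : i ≠ j)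
    (hM : ∀ k l, k ≠ i → l ≠ i → M k l = star (M l k)) (α : DualQuaternion) :
    redDet (M * addMatrix i j α) = redDet M := by
  let M' : Matrix (Fin n) (Fin n) DualQuaternion := fun k l =>
    if l = i then M k j * α else M k l
  have h0 : redDet M' = 0 := by
    refine redDet_dependent (i := i) (j := j) (α := α) hij (fun k => ?_) fun k l hk hl => ?_
    · simp [M', hij.symm]
    · simpa [M', hk, hl] using hM k l hk hl
  rw [redDet_add_column (M₂ := M) (M₃ := M') (i := i), h0, add_zero]
  · intro k l hl
    simp [mul_addMatrix_apply, hl]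
  · intro k l hl
    simp [mul_addMatrix_apply, hl, M']
  · intro k
    simp [mul_addMatrix_apply, M']

end column

/-- The Chen determinant of a dual quaternion Hermitian matrix is invariant under the
two-sided addition operation: `Cdet(P_{ij;α}* A P_{ij;α}) = Cdet(A)`. -/
theorem statement9 {n : ℕ} (A : Matrix (Fin n) (Fin n) DualQuaternion) (hA : Aᴴ = A)
    (i j : Fin n) (hij : i ≠ j) (α : DualQuaternion) :
    Cdet ((addMatrix i j α)ᴴ * A * addMatrix i j α) = Cdet A := by
  have hA' : ∀ k l, A k l = star (A l k) := fun k l => by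
    conv_lhs => rw [← hA]
    rfl
  have hB : ((addMatrix i j α)ᴴ * A * addMatrix i j α)ᴴ =
      (addMatrix i j α)ᴴ * A * addMatrix i j α := by
    rw [dq_conjTranspose_mul, dq_conjTranspose_mul, hA, dq_conjTranspose_conjTranspose,
      Matrix.mul_assoc]
  have hC : (addMatrix i j α)ᴴ * A * addMatrix i j α =
      (A * addMatrix i j α)ᴴ * addMatrix i j α := by
    rw [dq_conjTranspose_mul, hA]
  rw [Cdet_eq_redDet hA, Cdet_eq_redDet hB, hC, redDet_mul_addMatrix hij,
    redDet_conjTranspose, redDet_mul_addMatrix hij fun k l _ _ => hA' k l]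
  -- Away from the index `i`, the matrix `(A P)ᴴ` has the same entries as `A`.
  intro k l hk hl
  simp only [Matrix.conjTranspose_apply, mul_addMatrix_apply, hk, hl, if_false, add_zero]
  rw [← hA' k l, ← hA' l k, hA' k l]

end DQPaper
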